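/- Second-order exponential product expansion (Proposition 4.3). For i = 0, …, m let a^i ∈ L^∞([0,T]; ℝ) and let g_i ∈ C^2(Ω; ℝ^n) be vector fields on an open set Ω ⊆ ℝ^n. Set A^i(s) := ∫_0^s a^i(σ) dσ and, for i < j, A^{i,j}(s) := ∫_0^s A^i(σ) a^j(σ) dσ. Then every solution x(·) (on some interval [0,τ]) of ẋ(t) = Σ_{i=0}^m a^i(t) g_i(x(t)) satisfies, assuming the relevant flows are defined, x(t) = e^{A^0(t) g_0} ∘ ⋯ ∘ e^{A^m(t) g_m} ∘ e^{A^{0,1}(t) [g_0,g_1]} ∘ ⋯ ∘ e^{A^{m−1,m}(t) [g_{m−1},g_m]}(x(0)) + o(t²) as t → 0+, where the product over the bracket factors is taken in lexicographic order of the pairs (i,j) with i < j. -/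

import Mathlib

open MeasureTheory Set Filter Topology

/-- Lie bracket of two vector fields on `ℝⁿ`. -/
noncomputable def lieBracket {n : ℕ} (X Y : (Fin n → ℝ) → (Fin n → ℝ)) (x : Fin n → ℝ) :
    Fin n → ℝ :=
  fderiv ℝ Y x (X x) - fderiv ℝ X x (Y x)

/-- The list of all pairs `(i,j)` with `i < j`, in lexicographic order. -/
def lexPairs (M : ℕ) : List (Fin (M + 1) × Fin (M + 1)) :=
  (List.finRange (M + 1)).foldr
    (fun i acc =>
      (((List.finRange (M + 1)).filter (fun j => decide (i < j))).map (fun j => (i, j))) ++ acc)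
    []

/-!
Both sides are expanded up to `o(t²)`, all vector fields and derivatives being taken at `x₀ = x(0)`.

* Applying the mean value inequality in `τ` to the remainder, a flow `φ` of `f` satisfies
  `φ τ y = y + τ f(x₀) + τ Df(x₀)(y - x₀) + (τ²/2) Df(x₀) f(x₀) + o(|τ| (|τ| + |y - x₀|))`. Since
  the brackets are run for times `O(t²)`, the product of flows is therefore
  `x₀ + ∑ Aⁱ gᵢ + ∑ (Aⁱ)²/2 Dgᵢ gᵢ + ∑_{i<j} Aⁱ Aʲ Dgᵢ gⱼ + ∑_{i<j} Aⁱʲ [gᵢ, gⱼ] + o(t²)`.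
* Inserting the integral equation for the solution into itself gives
  `x(t) = x₀ + ∑ Aⁱ gᵢ + ∑_{i,j} Aʲⁱ Dgᵢ gⱼ + o(t²)`.

Integration by parts, `Aⁱʲ + Aʲⁱ = Aⁱ Aʲ`, identifies the two quadratic terms.
-/

open Asymptotics

section Flow

variable {E : Type*} [NormedAddCommGroup E]

theorem isBigO_fst_sub_zero_prod (x₀ : E) :
    (fun p : ℝ × E => p.1) =O[𝓝 (0, x₀)] fun p => p - (0, x₀) :=
  (isBigO_fst_prod' (f' := fun p : ℝ × E => p - (0, x₀))).congr_left fun p => sub_zero p.1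

variable [NormedSpace ℝ E]

theorem isBigO_smul_const {α F : Type*} [Norm F] {l : Filter α} {ρ : α → F} {τ : α → ℝ}
    (hτ : τ =O[l] ρ) (v : E) : (fun t => τ t • v) =O[l] ρ :=
  ((ContinuousLinearMap.toSpanSingleton ℝ v).isBigO_comp τ l).trans hτ

/-- `φ` is a local flow of the vector field `f` near `x₀`: for `y` close to `x₀`, the curve
`τ ↦ φ τ y` starts at `y` and is an integral curve of `f` for small `τ`. Neither uniqueness of
integral curves nor continuity of `φ` is part of the definition. -/
structure IsLocalFlowAt (φ : ℝ → E → E) (f : E → E) (x₀ : E) : Prop where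
  map_zero : ∀ᶠ y in 𝓝 x₀, φ 0 y = y
  hasDerivAt : ∀ᶠ p : ℝ × E in 𝓝 (0, x₀),
    HasDerivAt (fun τ => φ τ p.2) (f (φ p.1 p.2)) p.1

theorem eventually_forall_mem_uIcc_zero {X : Type*} [TopologicalSpace X] {x₀ : X}
    {P : ℝ × X → Prop} (hP : ∀ᶠ p in 𝓝 (0, x₀), P p) :
    ∀ᶠ p in 𝓝 ((0 : ℝ), x₀), ∀ σ ∈ uIcc 0 p.1, P (σ, p.2) := by
  rw [nhds_prod_eq] at hP ⊢
  obtain ⟨Q, hQ, R, hR, hQR⟩ := eventually_prod_iff.1 hP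
  obtain ⟨δ, hδ, hball⟩ := Metric.eventually_nhds_iff_ball.1 hQ
  filter_upwards [prod_mem_prod (Metric.ball_mem_nhds 0 hδ) hR] with p ⟨hp₁, hp₂⟩ σ hσ
  have hseg := (convex_ball 0 δ).ordConnected.uIcc_subset (Metric.mem_ball_self hδ) hp₁
  exact hQR (hball σ (hseg hσ)) hp₂

theorem isLittleO_fst_mul_norm_pow_of_hasDerivAt {x₀ : E} {R R' : ℝ → E → E} {k : ℕ}
    (hR₀ : ∀ᶠ y in 𝓝 x₀, R 0 y = 0)
    (hR : ∀ᶠ p : ℝ × E in 𝓝 (0, x₀), HasDerivAt (fun τ => R τ p.2) (R' p.1 p.2) p.1)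
    (hR' : (fun p : ℝ × E => R' p.1 p.2) =o[𝓝 (0, x₀)] fun p => ‖p - (0, x₀)‖ ^ k) :
    (fun p : ℝ × E => R p.1 p.2) =o[𝓝 (0, x₀)] fun p => p.1 * ‖p - (0, x₀)‖ ^ k := by
  refine isLittleO_iff.2 fun ε hε => ?_
  filter_upwards [eventually_forall_mem_uIcc_zero (hR.and (hR'.bound hε)),
    (continuousAt_snd (p := ((0 : ℝ), x₀))).eventually hR₀] with ⟨τ, y⟩ hseg hzero
  have hbound : ∀ σ ∈ uIcc 0 τ, ‖R' σ y‖ ≤ ε * ‖(τ, y) - (0, x₀)‖ ^ k := fun σ hσ => by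
    have hστ : ‖σ‖ ≤ ‖τ‖ := by simpa using abs_sub_left_of_mem_uIcc hσ
    have hnorm : ‖(σ, y) - (0, x₀)‖ ≤ ‖(τ, y) - (0, x₀)‖ := by
      simpa only [Prod.mk_sub_mk, Prod.norm_mk, sub_zero] using max_le_max_right _ hστ
    calc ‖R' σ y‖ ≤ ε * ‖‖(σ, y) - (0, x₀)‖ ^ k‖ := (hseg σ hσ).2
      _ ≤ ε * ‖(τ, y) - (0, x₀)‖ ^ k := by rw [norm_pow, norm_norm]; gcongr
  have hmvt := (convex_uIcc 0 τ).norm_image_sub_le_of_norm_hasDerivWithin_le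
    (fun σ hσ => (hseg σ hσ).1.hasDerivWithinAt) hbound left_mem_uIcc right_mem_uIcc
  calc ‖R τ y‖ = ‖R τ y - R 0 y‖ := by rw [hzero, sub_zero]
    _ ≤ ε * ‖(τ, y) - (0, x₀)‖ ^ k * ‖τ - 0‖ := hmvt
    _ = ε * ‖τ * ‖(τ, y) - (0, x₀)‖ ^ k‖ := by rw [norm_mul, norm_pow, norm_norm, sub_zero]; ring

namespace IsLocalFlowAt

variable {φ : ℝ → E → E} {f : E → E} {x₀ : E}

theorem of_forall (h₀ : ∀ y, φ 0 y = y)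
    (h : ∀ y τ, HasDerivAt (fun τ' => φ τ' y) (f (φ τ y)) τ) : IsLocalFlowAt φ f x₀ :=
  ⟨.of_forall h₀, .of_forall fun p => h p.2 p.1⟩

theorem eventually_map_zero (hφ : IsLocalFlowAt φ f x₀) :
    ∀ᶠ p : ℝ × E in 𝓝 (0, x₀), φ 0 p.2 = p.2 :=
  (continuousAt_snd (p := ((0 : ℝ), x₀))).eventually hφ.map_zero

-- The curve `s ↦ φ (s * τ) y`, `s ∈ [0, 1]`, moves at speed less than `r / 2` as long as it is in
-- the ball of radius `r` around `x₀`, hence cannot leave that ball.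
theorem tendsto (hφ : IsLocalFlowAt φ f x₀) (hf : ContinuousAt f x₀) :
    Tendsto (fun p : ℝ × E => φ p.1 p.2) (𝓝 (0, x₀)) (𝓝 x₀) := by
  obtain ⟨δ, hδ, hfδ⟩ := Metric.eventually_nhds_iff_ball.1
    (hf.norm.eventually_lt_const (lt_add_one ‖f x₀‖))
  refine Metric.tendsto_nhds.2 fun ε hε => ?_
  set r := min δ ε
  have hr₀ : 0 < r := lt_min hδ hε
  have hspeed : ∀ᶠ p : ℝ × E in 𝓝 (0, x₀), |p.1| * (‖f x₀‖ + 1) < r / 2 :=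
    (Continuous.tendsto' (by fun_prop) _ 0 (by simp)).eventually_lt_const (half_pos hr₀)
  have hstart : ∀ᶠ p : ℝ × E in 𝓝 (0, x₀), ‖p.2 - x₀‖ < r / 2 :=
    (Continuous.tendsto' (by fun_prop) _ 0 (by simp)).eventually_lt_const (half_pos hr₀)
  filter_upwards [hspeed, hstart, hφ.eventually_map_zero,
    eventually_forall_mem_uIcc_zero hφ.hasDerivAt] with ⟨τ, y⟩ hτ hy hzero hflow
  have hderiv : ∀ s ∈ Icc (0 : ℝ) 1,
      HasDerivAt (fun s => φ (s * τ) y - y) (τ • f (φ (s * τ) y)) s := fun s hs => by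
    have hsτ : s * τ ∈ uIcc 0 τ := by
      simpa using (convex_uIcc 0 τ).add_smul_sub_mem left_mem_uIcc right_mem_uIcc hs
    simpa using ((hflow _ hsτ).scomp s (hasDerivAt_mul_const τ)).sub_const y
  have hmem_ball : ∀ s ∈ Icc (0 : ℝ) 1, ‖φ (s * τ) y - y‖ ≤ r / 2 * s →
      φ (s * τ) y ∈ Metric.ball x₀ r := fun s hs hle => by
    rw [mem_ball_iff_norm, ← sub_add_sub_cancel _ y]
    have := norm_add_le (φ (s * τ) y - y) (y - x₀)
    nlinarith [hs.2]
  have htrap : ‖φ (1 * τ) y - y‖ ≤ r / 2 * 1 := by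
    refine image_norm_le_of_norm_deriv_right_lt_deriv_boundary (f := fun s => φ (s * τ) y - y)
      (B := fun s => r / 2 * s) (B' := fun _ => r / 2)
      (fun s hs => (hderiv s hs).continuousAt.continuousWithinAt)
      (fun s hs => (hderiv s (Ico_subset_Icc_self hs)).hasDerivWithinAt) (by simp [hzero])
      (fun s => by simpa using (hasDerivAt_id s).const_mul (r / 2)) (fun s hs heq => ?_)
      (right_mem_Icc.2 zero_le_one)
    have hf_lt := hfδ _ (Metric.ball_subset_ball (min_le_left δ ε)
      (hmem_ball s (Ico_subset_Icc_self hs) heq.le))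
    calc ‖τ • f (φ (s * τ) y)‖ = |τ| * ‖f (φ (s * τ) y)‖ := norm_smul τ _
      _ ≤ |τ| * (‖f x₀‖ + 1) := by gcongr
      _ < r / 2 := hτ
  simpa only [one_mul] using Metric.mem_ball.1 <| Metric.ball_subset_ball (min_le_right δ ε)
    (hmem_ball 1 (right_mem_Icc.2 zero_le_one) htrap)

theorem isLittleO_sub_taylor_one (hφ : IsLocalFlowAt φ f x₀) (hf : ContinuousAt f x₀) :
    (fun p : ℝ × E => φ p.1 p.2 - p.2 - p.1 • f x₀) =o[𝓝 (0, x₀)] fun p => p.1 := by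
  have hderiv : ∀ᶠ p : ℝ × E in 𝓝 (0, x₀), HasDerivAt (fun τ => φ τ p.2 - p.2 - τ • f x₀)
      (f (φ p.1 p.2) - f x₀) p.1 := by
    filter_upwards [hφ.hasDerivAt] with p hp
    simpa using (hp.sub_const p.2).fun_sub ((hasDerivAt_id p.1).smul_const (f x₀))
  have hspeed : (fun p : ℝ × E => f (φ p.1 p.2) - f x₀) =o[𝓝 (0, x₀)]
      fun p => ‖p - (0, x₀)‖ ^ 0 := by
    simpa only [pow_zero, isLittleO_one_iff, sub_self, Function.comp_apply] using
      (hf.tendsto.comp (hφ.tendsto hf)).sub_const (f x₀)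
  simpa using isLittleO_fst_mul_norm_pow_of_hasDerivAt
    (R := fun τ y => φ τ y - y - τ • f x₀) (R' := fun τ y => f (φ τ y) - f x₀)
    (hφ.map_zero.mono fun y hy => by simp [hy]) hderiv hspeed

theorem isBigO_sub (hφ : IsLocalFlowAt φ f x₀) (hf : ContinuousAt f x₀) :
    (fun p : ℝ × E => φ p.1 p.2 - x₀) =O[𝓝 (0, x₀)] fun p => p - (0, x₀) := by
  have hsnd : (fun p : ℝ × E => p.2 - x₀) =O[𝓝 (0, x₀)] fun p => p - (0, x₀) :=
    isBigO_snd_prod' (f' := fun p : ℝ × E => p - (0, x₀))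
  have hsmul : (fun p : ℝ × E => p.1 • f x₀) =O[𝓝 (0, x₀)] fun p => p - (0, x₀) :=
    isBigO_smul_const (isBigO_fst_sub_zero_prod x₀) (f x₀)
  have hremainder := (hφ.isLittleO_sub_taylor_one hf).isBigO.trans (isBigO_fst_sub_zero_prod x₀)
  refine ((hremainder.add hsmul).add hsnd).congr_left fun p => ?_
  abel

theorem isLittleO_sub_taylor_two (hφ : IsLocalFlowAt φ f x₀) {D : E →L[ℝ] E}
    (hf : HasFDerivAt f D x₀) :
    (fun p : ℝ × E => φ p.1 p.2 - p.2 -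
        (p.1 • f x₀ + p.1 • D (p.2 - x₀) + (p.1 ^ 2 / 2) • D (f x₀)))
      =o[𝓝 (0, x₀)] fun p => p.1 * ‖p - (0, x₀)‖ := by
  have hderiv : ∀ᶠ p : ℝ × E in 𝓝 (0, x₀), HasDerivAt
      (fun τ => φ τ p.2 - p.2 - (τ • f x₀ + τ • D (p.2 - x₀) + (τ ^ 2 / 2) • D (f x₀)))
      (f (φ p.1 p.2) - (f x₀ + D (p.2 - x₀) + p.1 • D (f x₀))) p.1 := by
    filter_upwards [hφ.hasDerivAt] with p hp
    have hsq : HasDerivAt (fun τ : ℝ => τ ^ 2 / 2) p.1 p.1 := by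
      simpa using (hasDerivAt_pow 2 p.1).div_const 2
    simpa using (hp.sub_const p.2).fun_sub ((((hasDerivAt_id p.1).smul_const (f x₀)).fun_add
      ((hasDerivAt_id p.1).smul_const (D (p.2 - x₀)))).fun_add (hsq.smul_const (D (f x₀))))
  have htaylor : (fun p : ℝ × E => f (φ p.1 p.2) - f x₀ - D (φ p.1 p.2 - x₀)) =o[𝓝 (0, x₀)]
      fun p => p - (0, x₀) :=
    (hf.isLittleO.comp_tendsto (hφ.tendsto hf.continuousAt)).trans_isBigO
      (hφ.isBigO_sub hf.continuousAt)
  have hlinear : (fun p : ℝ × E => D (φ p.1 p.2 - p.2 - p.1 • f x₀)) =o[𝓝 (0, x₀)]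
      fun p => p - (0, x₀) :=
    ((D.isBigO_comp _ _).trans_isLittleO (hφ.isLittleO_sub_taylor_one hf.continuousAt)).trans_isBigO
      (isBigO_fst_sub_zero_prod x₀)
  have hspeed : (fun p : ℝ × E => f (φ p.1 p.2) - (f x₀ + D (p.2 - x₀) + p.1 • D (f x₀)))
      =o[𝓝 (0, x₀)] fun p => ‖p - (0, x₀)‖ ^ 1 := by
    refine ((htaylor.add hlinear).norm_right.congr (fun p => ?_) fun p => (pow_one _).symm)
    simp only [map_sub, map_smul]
    abel
  simpa only [pow_one] using isLittleO_fst_mul_norm_pow_of_hasDerivAt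
    (R := fun τ y => φ τ y - y - (τ • f x₀ + τ • D (y - x₀) + (τ ^ 2 / 2) • D (f x₀)))
    (R' := fun τ y => f (φ τ y) - (f x₀ + D (y - x₀) + τ • D (f x₀)))
    (hφ.map_zero.mono fun y hy => by simp [hy]) hderiv hspeed

end IsLocalFlowAt

section FlowProduct

variable {α : Type*} {l : Filter α} {ρ : α → ℝ} {x₀ : E}

theorem isBigO_list_sum_smul_const {ι : Type*} {L : List ι} {τ : ι → α → ℝ}
    (hτ : ∀ i ∈ L, τ i =O[l] ρ) (v : ι → E) :
    (fun t => (L.map fun i => τ i t • v i).sum) =O[l] ρ := by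
  induction L with
  | nil => simpa using isBigO_zero ρ l
  | cons i L ih =>
    simp only [List.map_cons, List.sum_cons]
    rw [List.forall_mem_cons] at hτ
    exact (isBigO_smul_const hτ.1 (v i)).add (ih hτ.2)

theorem isLittleO_flow_list_foldr_comp_sub_taylor_one {ι : Type*} {L : List ι} {φ : ι → ℝ → E → E}
    {f : ι → E → E} {τ : ι → α → ℝ} {y : α → E}
    (hφ : ∀ i ∈ L, IsLocalFlowAt (φ i) (f i) x₀) (hf : ∀ i ∈ L, ContinuousAt (f i) x₀)
    (hρ : Tendsto ρ l (𝓝 0)) (hτ : ∀ i ∈ L, τ i =O[l] ρ) (hy : Tendsto y l (𝓝 x₀)) :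
    (fun t => (L.map fun i => φ i (τ i t)).foldr (· ∘ ·) id (y t) - y t -
      (L.map fun i => τ i t • f i x₀).sum) =o[l] ρ := by
  induction L with
  | nil => simp
  | cons i L ih =>
    rw [List.forall_mem_cons] at hφ hf hτ
    have htail := ih hφ.2 hf.2 hτ.2
    set z : α → E := fun t => (L.map fun i => φ i (τ i t)).foldr (· ∘ ·) id (y t)
    have hz : Tendsto z l (𝓝 x₀) := by
      have hzy := (htail.isBigO.add (isBigO_list_sum_smul_const hτ.2 (f · x₀))).trans_tendsto hρ
      simpa using hzy.add hy
    have hhead := ((hφ.1.isLittleO_sub_taylor_one hf.1).comp_tendsto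
      ((hτ.1.trans_tendsto hρ).prodMk_nhds hz)).trans_isBigO hτ.1
    refine (hhead.add htail).congr_left fun t => ?_
    simp only [List.map_cons, List.foldr_cons, List.sum_cons, Function.comp_apply, z]
    abel

theorem IsLocalFlowAt.isLittleO_comp_sub_taylor_two {φ : ℝ → E → E} {f : E → E}
    {D : E →L[ℝ] E} (hφ : IsLocalFlowAt φ f x₀) (hf : HasFDerivAt f D x₀)
    (hρ : Tendsto ρ l (𝓝 0)) {τ : α → ℝ} (hτ : τ =O[l] ρ) {z v : α → E} (hv : v =O[l] ρ)
    (hz : (fun t => z t - x₀ - v t) =o[l] ρ) :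
    (fun t => φ (τ t) (z t) - z t - (τ t • f x₀ + τ t • D (v t) + (τ t ^ 2 / 2) • D (f x₀)))
      =o[l] fun t => ρ t ^ 2 := by
  have hzO : (fun t => z t - x₀) =O[l] ρ := (hz.isBigO.add hv).congr_left fun t => by abel
  have hz₀ : Tendsto z l (𝓝 x₀) := tendsto_sub_nhds_zero_iff.1 (hzO.trans_tendsto hρ)
  have hgauge : (fun t => τ t * ‖(τ t, z t) - (0, x₀)‖) =O[l] fun t => ρ t ^ 2 := by
    simpa only [Prod.mk_sub_mk, sub_zero, sq] using hτ.mul (hτ.prod_left hzO).norm_left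
  have hflow := ((hφ.isLittleO_sub_taylor_two hf).comp_tendsto
    ((hτ.trans_tendsto hρ).prodMk_nhds hz₀)).trans_isBigO hgauge
  have hlinear : (fun t => τ t • D (z t - x₀ - v t)) =o[l] fun t => ρ t ^ 2 := by
    simpa only [smul_eq_mul, sq] using
      hτ.smul_isLittleO ((D.isBigO_comp _ l).trans_isLittleO hz)
  refine (hflow.add hlinear).congr_left fun t => ?_
  simp only [Function.comp_apply, map_sub, smul_sub]
  abel

theorem isLittleO_flow_ofFn_foldr_comp_sub_taylor_two {k : ℕ} {φ : Fin k → ℝ → E → E}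
    {f : Fin k → E → E} {D : Fin k → E →L[ℝ] E} {τ : Fin k → α → ℝ} {y : α → E}
    (hφ : ∀ i, IsLocalFlowAt (φ i) (f i) x₀) (hf : ∀ i, HasFDerivAt (f i) (D i) x₀)
    (hρ : Tendsto ρ l (𝓝 0)) (hτ : ∀ i, τ i =O[l] ρ) (hy : (fun t => y t - x₀) =o[l] ρ) :
    (fun t => (List.ofFn fun i => φ i (τ i t)).foldr (· ∘ ·) id (y t) - y t -
      (∑ i, τ i t • f i x₀ + ∑ i, (τ i t ^ 2 / 2) • D i (f i x₀) +
        ∑ i, ∑ j ∈ Finset.Ioi i, (τ i t * τ j t) • D i (f j x₀))) =o[l] fun t => ρ t ^ 2 := by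
  induction k with
  | zero => simp
  | succ k ih =>
    have htail := ih (fun i => hφ i.succ) (fun i => hf i.succ) fun i => hτ i.succ
    set z : α → E := fun t =>
      (List.ofFn fun i : Fin k => φ i.succ (τ i.succ t)).foldr (· ∘ ·) id (y t) with hz_def
    set v : α → E := fun t => ∑ i : Fin k, τ i.succ t • f i.succ x₀ with hv_def
    have hv : v =O[l] ρ := .fun_sum fun i _ => isBigO_smul_const (hτ i.succ) _
    have hzv : (fun t => z t - x₀ - v t) =o[l] ρ := by
      have hfirst := isLittleO_flow_list_foldr_comp_sub_taylor_one (L := List.finRange k)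
        (fun i _ => hφ i.succ) (fun i _ => (hf i.succ).continuousAt) hρ (fun i _ => hτ i.succ)
        (tendsto_sub_nhds_zero_iff.1 (hy.isBigO.trans_tendsto hρ))
      refine (hfirst.add hy).congr_left fun t => ?_
      rw [← List.ofFn_eq_map, ← Fin.sum_univ_def]
      simp only [hz_def, hv_def]
      abel
    have hhead := (hφ 0).isLittleO_comp_sub_taylor_two (hf 0) hρ (hτ 0) hv hzv
    refine (hhead.add htail).congr_left fun t => ?_
    simp only [hz_def, hv_def, List.ofFn_succ, List.foldr_cons, Function.comp_apply,
      Fin.sum_univ_succ, Fin.sum_Ioi_zero, Fin.sum_Ioi_succ, map_sum, map_smul, Finset.smul_sum,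
      smul_smul]
    abel

end FlowProduct

end Flow

section Integral

variable {E : Type*} [NormedAddCommGroup E]

theorem intervalIntegrable_of_mem_Icc {F : ℝ → E} {c T t : ℝ}
    (hF : IntervalIntegrable F volume c T) (ht : t ∈ Icc c T) : IntervalIntegrable F volume c t :=
  hF.mono_set (uIcc_subset_uIcc_left (Icc_subset_uIcc ht))

variable [NormedSpace ℝ E]

theorem isBigOWith_integral_smul {T : ℝ} (hT : 0 < T) {a : ℝ → ℝ} {K : ℝ}
    (ha : ∀ᵐ s ∂volume.restrict (Icc 0 T), |a s| ≤ K) {h : ℝ → E} {k : ℕ} {C : ℝ} (hC : 0 ≤ C)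
    (hh : IsBigOWith C (𝓝[>] 0) h fun s => s ^ k) :
    IsBigOWith (|K| * C) (𝓝[>] 0) (fun t => ∫ s in 0..t, a s • h s) fun t => t ^ (k + 1) := by
  obtain ⟨δ, hδ : 0 < δ, hhδ⟩ := mem_nhdsGT_iff_exists_Ioo_subset.1 hh.bound
  rw [ae_restrict_iff' measurableSet_Icc] at ha
  refine .of_bound ?_
  filter_upwards [Ioo_mem_nhdsGT (lt_min hδ hT)] with t ⟨ht₀, ht⟩
  have hbound : ∀ᵐ s, s ∈ uIoc 0 t → ‖a s • h s‖ ≤ |K| * (C * t ^ k) := by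
    filter_upwards [ha] with s has hs
    rw [uIoc_of_le ht₀.le] at hs
    have hsT : s ∈ Icc 0 T := ⟨hs.1.le, (hs.2.trans_lt ht).le.trans (min_le_right δ T)⟩
    have hsδ : s ∈ Ioo 0 δ := ⟨hs.1, (hs.2.trans_lt ht).trans_le (min_le_left δ T)⟩
    calc ‖a s • h s‖ = |a s| * ‖h s‖ := norm_smul _ _
      _ ≤ |K| * (C * ‖s ^ k‖) := by
        have haK : |a s| ≤ |K| := (has hsT).trans (le_abs_self K)
        gcongr
        exact hhδ hsδ
      _ ≤ |K| * (C * t ^ k) := by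
        rw [Real.norm_of_nonneg (pow_nonneg hs.1.le k)]
        gcongr
        exacts [hs.1.le, hs.2]
  calc ‖∫ s in 0..t, a s • h s‖ ≤ |K| * (C * t ^ k) * |t - 0| :=
        intervalIntegral.norm_integral_le_of_norm_le_const_ae hbound
    _ = |K| * C * ‖t ^ (k + 1)‖ := by
        rw [sub_zero, Real.norm_eq_abs, abs_pow, abs_of_pos ht₀]
        ring

theorem isBigO_integral_smul {T : ℝ} (hT : 0 < T) {a : ℝ → ℝ}
    (ha : ∃ K, ∀ᵐ s ∂volume.restrict (Icc 0 T), |a s| ≤ K) {h : ℝ → E} {k : ℕ}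
    (hh : h =O[𝓝[>] 0] fun s => s ^ k) :
    (fun t => ∫ s in 0..t, a s • h s) =O[𝓝[>] 0] fun t => t ^ (k + 1) := by
  obtain ⟨K, hK⟩ := ha
  obtain ⟨C, hC, hhC⟩ := hh.exists_nonneg
  exact (isBigOWith_integral_smul hT hK hC hhC).isBigO

theorem isLittleO_integral_smul {T : ℝ} (hT : 0 < T) {a : ℝ → ℝ}
    (ha : ∃ K, ∀ᵐ s ∂volume.restrict (Icc 0 T), |a s| ≤ K) {h : ℝ → E} {k : ℕ}
    (hh : h =o[𝓝[>] 0] fun s => s ^ k) :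
    (fun t => ∫ s in 0..t, a s • h s) =o[𝓝[>] 0] fun t => t ^ (k + 1) := by
  obtain ⟨K, hK⟩ := ha
  refine .of_isBigOWith fun ε hε => ?_
  have hδ : 0 < ε / (|K| + 1) := by positivity
  refine (isBigOWith_integral_smul hT hK hδ.le (hh.forall_isBigOWith hδ)).weaken ?_
  calc |K| * (ε / (|K| + 1)) ≤ (|K| + 1) * (ε / (|K| + 1)) := by gcongr; linarith
    _ = ε := by field_simp

theorem isBigO_integral {T : ℝ} (hT : 0 < T) {a : ℝ → ℝ}
    (ha : ∃ K, ∀ᵐ s ∂volume.restrict (Icc 0 T), |a s| ≤ K) :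
    (fun t => ∫ s in 0..t, a s) =O[𝓝[>] 0] fun t => t := by
  simpa using isBigO_integral_smul hT ha (h := fun _ => (1 : ℝ)) (k := 0)
    (by simpa using isBigO_refl (fun _ => (1 : ℝ)) (𝓝[>] (0 : ℝ)))

theorem isBigO_integral_integral_mul {T : ℝ} (hT : 0 < T) {a b : ℝ → ℝ}
    (ha : ∃ K, ∀ᵐ s ∂volume.restrict (Icc 0 T), |a s| ≤ K)
    (hb : ∃ K, ∀ᵐ s ∂volume.restrict (Icc 0 T), |b s| ≤ K) :
    (fun t => ∫ s in 0..t, (∫ σ in 0..s, a σ) * b s) =O[𝓝[>] 0] fun t => t ^ 2 := by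
  have hA : (fun s => ∫ σ in 0..s, a σ) =O[𝓝[>] 0] fun s => s ^ 1 := by
    simpa only [pow_one] using isBigO_integral hT ha
  simpa only [smul_eq_mul, mul_comm] using isBigO_integral_smul hT hb hA

theorem integral_integral_mul_add_integral_integral_mul {a b : ℝ → ℝ} {c t : ℝ}
    (ha : IntervalIntegrable a volume c t) (hb : IntervalIntegrable b volume c t) :
    (∫ s in c..t, (∫ σ in c..s, a σ) * b s) + ∫ s in c..t, (∫ σ in c..s, b σ) * a s =
      (∫ s in c..t, a s) * ∫ s in c..t, b s := by
  have hA := ha.absolutelyContinuousOnInterval_intervalIntegral (c := c) left_mem_uIcc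
  have hB := hb.absolutelyContinuousOnInterval_intervalIntegral (c := c) left_mem_uIcc
  have hparts := hA.integral_deriv_mul_eq_sub hB
  rw [intervalIntegral.integral_same, zero_mul, sub_zero] at hparts
  rw [← intervalIntegral.integral_add (hb.continuousOn_mul hA.continuousOn)
    (ha.continuousOn_mul hB.continuousOn), ← hparts]
  refine intervalIntegral.integral_congr_ae ?_
  filter_upwards [ha.ae_hasDerivAt_integral, hb.ae_hasDerivAt_integral] with s hAs hBs hs
  have hs' := uIoc_subset_uIcc hs
  rw [(hAs hs' c left_mem_uIcc).deriv, (hBs hs' c left_mem_uIcc).deriv]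
  ring

theorem integral_sum_smul_sub_integral_sum_smul {ι : Type*} [Fintype ι] {a : ι → ℝ → ℝ}
    {u v : ι → ℝ → E} {c t : ℝ} (ha : ∀ i, IntervalIntegrable (a i) volume c t)
    (hu : ∀ i, ContinuousOn (u i) (uIcc c t)) (hv : ∀ i, ContinuousOn (v i) (uIcc c t)) :
    (∫ s in c..t, ∑ i, a i s • u i s) - ∑ i, ∫ s in c..t, a i s • v i s =
      ∑ i, ∫ s in c..t, a i s • (u i s - v i s) := by
  have hau i := (ha i).smul_continuousOn (hu i)
  have hav i := (ha i).smul_continuousOn (hv i)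
  rw [intervalIntegral.integral_finsetSum fun i _ => hau i, ← Finset.sum_sub_distrib]
  simp only [smul_sub, intervalIntegral.integral_sub (hau _) (hav _)]

end Integral

section ControlSystem

variable {E : Type*} [NormedAddCommGroup E] [NormedSpace ℝ E] {T : ℝ} {x : ℝ → E}

-- If `F` is not integrable on any `[0, t]` with `0 < t`, then all the integrals are zero by
-- convention and `x` is constant.
theorem exists_continuousOn_Icc_of_eq_add_integral (hT : 0 < T) {F : ℝ → E}
    (hx : ∀ t ∈ Icc 0 T, x t = x 0 + ∫ s in 0..t, F s) :
    ∃ t ∈ Ioc 0 T, ContinuousOn x (Icc 0 t) := by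
  by_cases hF : ∃ t ∈ Ioc 0 T, IntervalIntegrable F volume 0 t
  · obtain ⟨t, ht, hFt⟩ := hF
    refine ⟨t, ht, ?_⟩
    have hprim := intervalIntegral.continuousOn_primitive_interval' hFt left_mem_uIcc
    rw [uIcc_of_le ht.1.le] at hprim
    exact (continuousOn_const.add hprim).congr fun s hs => hx s (Icc_subset_Icc_right ht.2 hs)
  · push Not at hF
    refine ⟨T, right_mem_Ioc.2 hT, (continuousOn_const (c := x 0)).congr fun t ht => ?_⟩
    rcases ht.1.eq_or_lt with rfl | ht₀
    · rfl
    · rw [hx t ht, intervalIntegral.integral_undef (hF t ⟨ht₀, ht.2⟩), add_zero]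

theorem exists_continuousOn_Icc_comp {X Y ι : Type*} [TopologicalSpace X] [TopologicalSpace Y]
    [Finite ι] {x : ℝ → X} {g : ι → X → Y} (hT : 0 < T) (hx : ContinuousOn x (Icc 0 T))
    (hg : ∀ i, ∀ᶠ y in 𝓝 (x 0), ContinuousAt (g i) y) :
    ∃ t ∈ Ioc 0 T, ∀ i, ContinuousOn (fun s => g i (x s)) (Icc 0 t) := by
  have hnear : ∀ᶠ s in 𝓝[≥] 0, ∀ i, ContinuousAt (g i) (x s) := by
    rw [← nhdsWithin_Icc_eq_nhdsGE hT]
    exact (hx 0 (left_mem_Icc.2 hT.le)).eventually (eventually_all.2 hg)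
  obtain ⟨t, ht, hsub⟩ :=
    mem_nhdsGE_iff_exists_Icc_subset.1 (inter_mem (Icc_mem_nhdsGE hT) hnear)
  have hIcc : Icc 0 t ⊆ Icc 0 T := fun s hs => (hsub hs).1
  exact ⟨t, ⟨ht, (hIcc (right_mem_Icc.2 ht.le)).2⟩, fun i s hs =>
    ((hsub hs).2 i).comp_continuousWithinAt ((hx s (hIcc hs)).mono hIcc)⟩

variable {ι : Type*} [Fintype ι] {a : ι → ℝ → ℝ} {g : ι → E → E} {D : ι → E →L[ℝ] E}

theorem isLittleO_sub_sum_integral_smul (hT : 0 < T)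
    (haI : ∀ i, IntervalIntegrable (a i) volume 0 T)
    (haB : ∀ i, ∃ K, ∀ᵐ s ∂volume.restrict (Icc 0 T), |a i s| ≤ K)
    {u v : ι → ℝ → E} (hx : ∀ t ∈ Icc 0 T, x t = x 0 + ∫ s in 0..t, ∑ i, a i s • u i s)
    (hu : ∀ i, ContinuousOn (u i) (Icc 0 T)) (hv : ∀ i, ContinuousOn (v i) (Icc 0 T)) {k : ℕ}
    (huv : ∀ i, (fun s => u i s - v i s) =o[𝓝[>] 0] fun s => s ^ k) :
    (fun t => x t - x 0 - ∑ i, ∫ s in 0..t, a i s • v i s) =o[𝓝[>] 0] fun t => t ^ (k + 1) := by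
  refine (IsLittleO.fun_sum (s := Finset.univ) fun i _ =>
    isLittleO_integral_smul hT (haB i) (huv i)).congr' ?_ .rfl
  filter_upwards [Ioc_mem_nhdsGT hT] with t ht
  have htT := Ioc_subset_Icc_self ht
  have hsub : uIcc 0 t ⊆ Icc 0 T := by rw [uIcc_of_le ht.1.le]; exact Icc_subset_Icc_right ht.2
  rw [hx t htT, add_sub_cancel_left, integral_sum_smul_sub_integral_sum_smul
    (fun i => intervalIntegrable_of_mem_Icc (haI i) htT) (fun i => (hu i).mono hsub)
    fun i => (hv i).mono hsub]

theorem isLittleO_solution_sub_taylor_one [CompleteSpace E] (hT : 0 < T)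
    (haI : ∀ i, IntervalIntegrable (a i) volume 0 T)
    (haB : ∀ i, ∃ K, ∀ᵐ s ∂volume.restrict (Icc 0 T), |a i s| ≤ K)
    (hx : ∀ t ∈ Icc 0 T, x t = x 0 + ∫ s in 0..t, ∑ i, a i s • g i (x s))
    (hgx : ∀ i, ContinuousOn (fun s => g i (x s)) (Icc 0 T)) :
    (fun t => x t - x 0 - ∑ i, (∫ s in 0..t, a i s) • g i (x 0)) =o[𝓝[>] 0] fun t => t := by
  have hgx₀ i : (fun s => g i (x s) - g i (x 0)) =o[𝓝[>] 0] fun s : ℝ => s ^ 0 := by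
    have hlim : Tendsto (fun s => g i (x s)) (𝓝[>] 0) (𝓝 (g i (x 0))) :=
      (hgx i 0 (left_mem_Icc.2 hT.le)).mono_left
        (nhdsWithin_le_iff.2 (mem_of_superset (Ioc_mem_nhdsGT hT) Ioc_subset_Icc_self))
    simpa only [pow_zero, isLittleO_one_iff, sub_self] using hlim.sub_const (g i (x 0))
  simpa only [intervalIntegral.integral_smul_const, zero_add, pow_one] using
    isLittleO_sub_sum_integral_smul hT haI haB hx hgx (fun _ => continuousOn_const) hgx₀

theorem integral_smul_const_add_sum_integral_smul [CompleteSpace E] {b : ℝ → ℝ} {c t : ℝ}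
    (ha : ∀ i, IntervalIntegrable (a i) volume c t) (hb : IntervalIntegrable b volume c t)
    (v : E) (w : ι → E) :
    ∫ s in c..t, b s • (v + ∑ i, (∫ σ in c..s, a i σ) • w i) =
      (∫ s in c..t, b s) • v + ∑ i, (∫ s in c..t, (∫ σ in c..s, a i σ) * b s) • w i := by
  have hA i := intervalIntegral.continuousOn_primitive_interval' (ha i) left_mem_uIcc
  have hbA i : IntervalIntegrable (fun s => ((∫ σ in c..s, a i σ) * b s) • w i) volume c t :=
    (hb.continuousOn_mul (hA i)).smul_continuousOn continuousOn_const
  have hbv : IntervalIntegrable (fun s => b s • v) volume c t :=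
    hb.smul_continuousOn continuousOn_const
  have hsum : IntervalIntegrable (fun s => ∑ i, ((∫ σ in c..s, a i σ) * b s) • w i) volume c t := by
    simpa only [Finset.sum_fn] using IntervalIntegrable.sum Finset.univ fun i _ => hbA i
  simp only [smul_add, Finset.smul_sum, smul_smul, mul_comm (b _)]
  rw [intervalIntegral.integral_add hbv hsum,
    intervalIntegral.integral_finsetSum fun i _ => hbA i]
  simp only [intervalIntegral.integral_smul_const]

theorem isLittleO_solution_sub_taylor_two [CompleteSpace E] (hT : 0 < T)
    (haI : ∀ i, IntervalIntegrable (a i) volume 0 T)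
    (haB : ∀ i, ∃ K, ∀ᵐ s ∂volume.restrict (Icc 0 T), |a i s| ≤ K)
    (hx : ∀ t ∈ Icc 0 T, x t = x 0 + ∫ s in 0..t, ∑ i, a i s • g i (x s))
    (hgx : ∀ i, ContinuousOn (fun s => g i (x s)) (Icc 0 T))
    (hg : ∀ i, HasFDerivAt (g i) (D i) (x 0)) :
    (fun t => x t - x 0 - (∑ i, (∫ s in 0..t, a i s) • g i (x 0) +
      ∑ i, ∑ j, (∫ s in 0..t, (∫ σ in 0..s, a j σ) * a i s) • D i (g j (x 0))))
      =o[𝓝[>] 0] fun t => t ^ 2 := by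
  have hfirst := isLittleO_solution_sub_taylor_one hT haI haB hx hgx
  have hxO : (fun t => x t - x 0) =O[𝓝[>] 0] fun t => t := by
    refine (hfirst.isBigO.add (.fun_sum (s := Finset.univ) fun i _ =>
      isBigO_smul_const (isBigO_integral hT (haB i)) (g i (x 0)))).congr_left fun t => ?_
    abel
  have hx₀ : Tendsto x (𝓝[>] 0) (𝓝 (x 0)) :=
    tendsto_sub_nhds_zero_iff.1 (hxO.trans_tendsto nhdsWithin_le_nhds)
  let v i s := g i (x 0) + ∑ j, (∫ σ in 0..s, a j σ) • D i (g j (x 0))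
  have hv i : ContinuousOn (v i) (Icc 0 T) := by
    refine continuousOn_const.add (continuousOn_finsetSum _ fun j _ => .smul ?_ continuousOn_const)
    simpa only [uIcc_of_le hT.le] using
      intervalIntegral.continuousOn_primitive_interval' (haI j) left_mem_uIcc
  have hgv i : (fun s => g i (x s) - v i s) =o[𝓝[>] 0] fun s => s ^ 1 := by
    have htaylor := ((hg i).isLittleO.comp_tendsto hx₀).trans_isBigO hxO
    have hlinear := ((D i).isBigO_comp _ (𝓝[>] (0 : ℝ))).trans_isLittleO hfirst
    refine (htaylor.add hlinear).congr (fun s => ?_) fun s => (pow_one s).symm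
    simp only [v, Function.comp_apply, map_sub, map_sum, map_smul]
    abel
  refine (isLittleO_sub_sum_integral_smul hT haI haB hx hgx hv hgv).congr' ?_ .rfl
  filter_upwards [Ioc_mem_nhdsGT hT] with t ht
  have hat i := intervalIntegrable_of_mem_Icc (haI i) (Ioc_subset_Icc_self ht)
  simp only [v, integral_smul_const_add_sum_integral_smul hat (hat _), Finset.sum_add_distrib]

theorem isLittleO_solution_sub_taylor_two_of_contDiffAt [CompleteSpace E] (hT : 0 < T)
    (haI : ∀ i, IntervalIntegrable (a i) volume 0 T)
    (haB : ∀ i, ∃ K, ∀ᵐ s ∂volume.restrict (Icc 0 T), |a i s| ≤ K)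
    (hx : ∀ t ∈ Icc 0 T, x t = x 0 + ∫ s in 0..t, ∑ i, a i s • g i (x s))
    (hg : ∀ i, ContDiffAt ℝ 1 (g i) (x 0)) :
    (fun t => x t - x 0 - (∑ i, (∫ s in 0..t, a i s) • g i (x 0) +
      ∑ i, ∑ j, (∫ s in 0..t, (∫ σ in 0..s, a j σ) * a i s) • fderiv ℝ (g i) (x 0) (g j (x 0))))
      =o[𝓝[>] 0] fun t => t ^ 2 := by
  obtain ⟨t₁, ht₁, hxt₁⟩ := exists_continuousOn_Icc_of_eq_add_integral hT hx
  obtain ⟨t₂, ht₂, hgx⟩ := exists_continuousOn_Icc_comp ht₁.1 hxt₁ fun i =>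
    ((hg i).eventually (by simp)).mono fun y hy => hy.continuousAt
  have ht₂T : t₂ ∈ Icc 0 T := ⟨ht₂.1.le, ht₂.2.trans ht₁.2⟩
  have hsub : Icc 0 t₂ ⊆ Icc 0 T := Icc_subset_Icc_right ht₂T.2
  exact isLittleO_solution_sub_taylor_two ht₂.1
    (fun i => intervalIntegrable_of_mem_Icc (haI i) ht₂T)
    (fun i => (haB i).imp fun K => ae_restrict_of_ae_restrict_of_subset hsub)
    (fun t ht => hx t (hsub ht)) hgx
    (fun i => ((hg i).differentiableAt one_ne_zero).hasFDerivAt)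

end ControlSystem

section LexPairs

variable {M : ℕ}

theorem lexPairs_eq_flatMap (M : ℕ) :
    lexPairs M = (List.finRange (M + 1)).flatMap fun i =>
      ((List.finRange (M + 1)).filter (i < ·)).map (Prod.mk i) := by
  simp [lexPairs, List.flatMap_def]

theorem mem_lexPairs {p : Fin (M + 1) × Fin (M + 1)} : p ∈ lexPairs M ↔ p.1 < p.2 := by
  simp [lexPairs_eq_flatMap, Prod.ext_iff]

theorem sum_map_lexPairs {E : Type*} [AddCommMonoid E] (F : Fin (M + 1) × Fin (M + 1) → E) :
    ((lexPairs M).map F).sum = ∑ i, ∑ j ∈ Finset.Ioi i, F (i, j) := by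
  have hrow i : (((List.finRange (M + 1)).filter (i < ·)).map fun j => F (i, j)).sum =
      ∑ j ∈ Finset.Ioi i, F (i, j) := by
    rw [← List.sum_toFinset _ ((List.nodup_finRange _).filter _)]
    congr 1
    ext j
    simp
  simp [lexPairs_eq_flatMap, List.flatMap_def, List.map_flatten, List.sum_flatten,
    Function.comp_def, hrow, Fin.sum_univ_def]

end LexPairs

theorem sum_sum_smul_eq_of_add_swap_eq_mul {ι E : Type*} [Fintype ι] [LinearOrder ι]
    [LocallyFiniteOrderTop ι] [LocallyFiniteOrderBot ι] [AddCommGroup E] [Module ℝ E]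
    {A : ι → ℝ} {c : ι → ι → ℝ} (hc : ∀ i j, c i j + c j i = A i * A j) (w : ι → ι → E) :
    ∑ i, ∑ j, c j i • w i j = ∑ i, (A i ^ 2 / 2) • w i i +
      ∑ i, ∑ j ∈ Finset.Ioi i, (A i * A j) • w i j +
      ∑ i, ∑ j ∈ Finset.Ioi i, c i j • (w j i - w i j) := by
  have hdiag i : c i i = A i ^ 2 / 2 := by linarith [hc i i]
  have hoff : ∑ i, ∑ j ∈ {i}ᶜ, c j i • w i j =
      ∑ i, ∑ j ∈ Finset.Ioi i, ((A i * A j) • w i j + c i j • (w j i - w i j)) := by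
    rw [← Finset.sum_sum_Ioi_add_eq_sum_sum_off_diag fun i j => c i j • w j i]
    refine Finset.sum_congr rfl fun i _ => Finset.sum_congr rfl fun j _ => ?_
    rw [← hc i j]
    module
  calc ∑ i, ∑ j, c j i • w i j = ∑ i, (c i i • w i i + ∑ j ∈ {i}ᶜ, c j i • w i j) :=
        Finset.sum_congr rfl fun i _ => Fintype.sum_eq_add_sum_compl i _
    _ = _ := by simp only [Finset.sum_add_distrib, hoff, hdiag, add_assoc]

theorem second_order_exponential_expansion_general {E : Type*} [NormedAddCommGroup E]
    [NormedSpace ℝ E] [CompleteSpace E] {M : ℕ} {T : ℝ} (hT : 0 < T)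
    {g : Fin (M + 1) → E → E} {a : Fin (M + 1) → ℝ → ℝ} {x : ℝ → E}
    (hg : ∀ i, ContDiffAt ℝ 1 (g i) (x 0))
    (haI : ∀ i, IntervalIntegrable (a i) volume 0 T)
    (haB : ∀ i, ∃ K, ∀ᵐ s ∂volume.restrict (Icc 0 T), |a i s| ≤ K)
    (hx : ∀ t ∈ Icc 0 T, x t = x 0 + ∫ s in 0..t, ∑ i, a i s • g i (x s))
    {Φ : Fin (M + 1) → ℝ → E → E} (hΦ : ∀ i, IsLocalFlowAt (Φ i) (g i) (x 0))
    {ΦB : Fin (M + 1) → Fin (M + 1) → ℝ → E → E}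
    (hΦB : ∀ i j, i < j →
      IsLocalFlowAt (ΦB i j) (VectorField.lieBracket ℝ (g i) (g j)) (x 0)) :
    (fun t : ℝ => x t -
        (((List.ofFn fun i : Fin (M + 1) => Φ i (∫ s in 0..t, a i s)).foldr (· ∘ ·) id) ∘
          (((lexPairs M).map fun p =>
            ΦB p.1 p.2 (∫ s in 0..t, (∫ σ in 0..s, a p.1 σ) * a p.2 s)).foldr
              (· ∘ ·) id)) (x 0))
      =o[𝓝[>] 0] fun t => t ^ 2 := by
  have hρ : Tendsto (fun t : ℝ => t) (𝓝[>] 0) (𝓝 0) := nhdsWithin_le_nhds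
  have hρ₂ : Tendsto (fun t : ℝ => t ^ 2) (𝓝[>] 0) (𝓝 0) := by simpa using hρ.pow 2
  have hsq : (fun t : ℝ => t ^ 2) =o[𝓝[>] 0] fun t => t :=
    (isLittleO_pow_id one_lt_two).mono nhdsWithin_le_nhds
  have hA₂ p (_ : p ∈ lexPairs M) := isBigO_integral_integral_mul hT (haB p.1) (haB p.2)
  have hsolution := isLittleO_solution_sub_taylor_two_of_contDiffAt hT haI haB hx hg
  have hbrackets := isLittleO_flow_list_foldr_comp_sub_taylor_one (L := lexPairs M)
    (fun p hp => hΦB p.1 p.2 (mem_lexPairs.1 hp))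
    (fun p _ => ((hg p.1).lieBracket_vectorField (hg p.2) (m := 0) (by simp)).continuousAt)
    hρ₂ hA₂ tendsto_const_nhds
  have hbrackets_small := (hbrackets.isBigO.add (isBigO_list_sum_smul_const hA₂
    fun p => VectorField.lieBracket ℝ (g p.1) (g p.2) (x 0))).trans_isLittleO hsq
  have hproduct := isLittleO_flow_ofFn_foldr_comp_sub_taylor_two hΦ
    (fun i => ((hg i).differentiableAt one_ne_zero).hasFDerivAt) hρ
    (fun i => isBigO_integral hT (haB i)) (by simpa using hbrackets_small)
  refine ((hsolution.sub hproduct).sub hbrackets).congr' ?_ .rfl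
  filter_upwards [Ioc_mem_nhdsGT hT] with t ht
  have hat i := intervalIntegrable_of_mem_Icc (haI i) (Ioc_subset_Icc_self ht)
  rw [sum_map_lexPairs, sum_sum_smul_eq_of_add_swap_eq_mul
    (fun i j => integral_integral_mul_add_integral_integral_mul (hat i) (hat j))]
  simp only [VectorField.lieBracket, Function.comp_apply]
  abel

/-- **Second-order exponential product expansion** (Proposition 4.3).
`Φ i` is the flow of `gᵢ` and `ΦB i j` the flow of `[gᵢ,gⱼ]`;
`A i t = ∫₀ᵗ aⁱ` and `A2 i j t = ∫₀ᵗ Aⁱ aʲ`. -/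
theorem second_order_exponential_expansion
    {n M : ℕ} {T : ℝ} (hT : 0 < T)
    (Ω : Set (Fin n → ℝ)) (hΩ : IsOpen Ω)
    (g : Fin (M + 1) → (Fin n → ℝ) → Fin n → ℝ)
    (hg : ∀ i, ContDiffOn ℝ 2 (g i) Ω)
    (a : Fin (M + 1) → ℝ → ℝ)
    (haI : ∀ i, IntervalIntegrable (a i) volume 0 T)
    (haB : ∀ i, ∃ K : ℝ, ∀ᵐ s ∂(volume.restrict (Set.Icc (0:ℝ) T)), |a i s| ≤ K)
    (x : ℝ → Fin n → ℝ)
    (hx : ∀ t ∈ Set.Icc (0:ℝ) T, x t = x 0 + ∫ s in (0:ℝ)..t, ∑ i, a i s • g i (x s))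
    (hxΩ : ∀ t ∈ Set.Icc (0:ℝ) T, x t ∈ Ω)
    -- the flows of the `gᵢ` and of the brackets `[gᵢ,gⱼ]`, assumed defined
    (Φ : Fin (M + 1) → ℝ → (Fin n → ℝ) → Fin n → ℝ)
    (hΦ0 : ∀ i y, Φ i 0 y = y)
    (hΦ : ∀ i y τ, HasDerivAt (fun τ' => Φ i τ' y) (g i (Φ i τ y)) τ)
    (ΦB : Fin (M + 1) → Fin (M + 1) → ℝ → (Fin n → ℝ) → Fin n → ℝ)
    (hΦB0 : ∀ i j y, ΦB i j 0 y = y)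
    (hΦB : ∀ i j, i < j → ∀ y τ,
      HasDerivAt (fun τ' => ΦB i j τ' y) (lieBracket (g i) (g j) (ΦB i j τ y)) τ) :
    (fun t : ℝ => x t -
        (((List.ofFn fun i : Fin (M + 1) => Φ i (∫ s in (0:ℝ)..t, a i s)).foldr (· ∘ ·) id) ∘
          (((lexPairs M).map fun p =>
            ΦB p.1 p.2 (∫ s in (0:ℝ)..t, (∫ σ in (0:ℝ)..s, a p.1 σ) * a p.2 s)).foldr
              (· ∘ ·) id)) (x 0))
      =o[nhdsWithin 0 (Set.Ioi 0)] (fun t => t ^ 2) :=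
  second_order_exponential_expansion_general hT
    (fun i => ((hg i).contDiffAt (hΩ.mem_nhds (hxΩ 0 (left_mem_Icc.2 hT.le)))).of_le one_le_two)
    haI haB hx (fun i => .of_forall (hΦ0 i) (hΦ i))
    (fun i j hij => .of_forall (hΦB0 i j) (hΦB i j hij))
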